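/- Suppose u(s) is a solution of the Painlevé IV equation u'' = (u')²/(2u) + (3/2)u³ + 4su² + 2(s²+1-2Θ_∞)u - 8Θ²/u with parameters Θ = 0, Θ_∞ = 1/2, and define z = (1/4)(-u' + u² + 2su) and H = (z²/u) - (u/2 + s)(z - 1/2). If u(s) = -2s - (2i/√π)e^{-s²} + O(s^{-1}) along the ray arg s = -π/4 as |s| → ∞, then H(s) = O(s^{-1}) along the same ray. -/

import Mathlib

open Complex Filter Asymptotics

/-- The direction `e^{-iπ/4}` of the ray `arg s = -π/4`. -/
noncomputable def rayDir : ℂ := Complex.exp (-(Real.pi : ℂ) * I / 4)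

open Topology Metric

/-! ### Regularity of solutions -/

/-- The part of the Painlevé IV equation (`Θ = 0`, `Θ_∞ = 1/2`) that does not involve `u'`,
as a polynomial in `w = u + 2s`. -/
noncomputable def painleveCubic (s w : ℂ) : ℂ := 3 / 2 * w ^ 3 - 5 * s * w ^ 2 + 4 * s ^ 2 * w

lemma painleveCubic_inj {s w₁ w₂ : ℂ} {M : ℝ} (hM : 0 < M) (hs : 4 * M ≤ ‖s‖)
    (h₁ : ‖w₁‖ ≤ M) (h₂ : ‖w₂‖ ≤ M) (h : painleveCubic s w₁ = painleveCubic s w₂) :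
    w₁ = w₂ := by
  by_contra hne
  have hq : 3 / 2 * (w₁ ^ 2 + w₁ * w₂ + w₂ ^ 2) - 5 * s * (w₁ + w₂) = -(4 * s ^ 2) := by
    have hd : w₁ - w₂ ≠ 0 := sub_ne_zero.mpr hne
    apply mul_left_cancel₀ hd
    unfold painleveCubic at h
    linear_combination h
  have hnorm : 4 * ‖s‖ ^ 2 ≤ 3 / 2 * (M ^ 2 + M * M + M ^ 2) + 5 * ‖s‖ * (M + M) := by
    calc 4 * ‖s‖ ^ 2 = ‖-(4 * s ^ 2)‖ := by simp
      _ = ‖3 / 2 * (w₁ ^ 2 + w₁ * w₂ + w₂ ^ 2) - 5 * s * (w₁ + w₂)‖ := by rw [hq]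
      _ ≤ ‖3 / 2 * (w₁ ^ 2 + w₁ * w₂ + w₂ ^ 2)‖ + ‖5 * s * (w₁ + w₂)‖ := norm_sub_le _ _
      _ ≤ 3 / 2 * (‖w₁‖ ^ 2 + ‖w₁‖ * ‖w₂‖ + ‖w₂‖ ^ 2) + 5 * ‖s‖ * (‖w₁‖ + ‖w₂‖) := by
        simp only [norm_mul, norm_div, Complex.norm_ofNat]
        gcongr
        · refine (norm_add₃_le).trans ?_
          simp
        · exact norm_add_le _ _
      _ ≤ _ := by gcongr
  nlinarith

lemma isPreconnected_ball_diff_center (c : ℂ) {ρ : ℝ} (hρ : 0 < ρ) :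
    IsPreconnected (ball c ρ \ {c}) := by
  have himage : (fun z => c + exp z) '' {z : ℂ | z.re < Real.log ρ} = ball c ρ \ {c} := by
    ext t
    simp only [Set.mem_image, Set.mem_ofPred_eq, Set.mem_sdiff, mem_ball, Set.mem_singleton_iff,
      dist_eq_norm]
    constructor
    · rintro ⟨z, hz, rfl⟩
      refine ⟨?_, by simp [exp_ne_zero]⟩
      rw [add_sub_cancel_left, norm_exp]
      exact (Real.lt_log_iff_exp_lt hρ).mp hz
    · rintro ⟨ht, htc⟩
      have hne : t - c ≠ 0 := sub_ne_zero.mpr htc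
      refine ⟨Complex.log (t - c), ?_, by rw [Complex.exp_log hne]; ring⟩
      rw [Complex.log_re]
      exact Real.log_lt_log (norm_pos_iff.mpr hne) ht
  rw [← himage]
  exact ((convex_halfSpace_re_lt _).isPreconnected).image _ (by fun_prop)

/-- If the derivative of `u` extends holomorphically across `s` and `u` is differentiable on a
punctured neighbourhood of `s`, then `u` extends holomorphically across `s` as well. -/
lemma exists_primitive_of_punctured {u : ℂ → ℂ} {s : ℂ}
    (hu : ∀ᶠ t in 𝓝[≠] s, DifferentiableAt ℂ u t) (hd : DifferentiableAt ℂ (deriv u) s) :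
    ∃ v : ℂ → ℂ, (∀ᶠ t in 𝓝 s, HasDerivAt v (deriv u t) t) ∧ (∀ᶠ t in 𝓝[≠] s, u t = v t) := by
  obtain ⟨ρ, hρ, hball⟩ := Metric.eventually_nhds_iff_ball.mp (eventually_nhdsWithin_iff.mp hu)
  have hopen : IsOpen (ball s ρ \ {s}) := isOpen_ball.sdiff isClosed_singleton
  have hdiff : DifferentiableOn ℂ u (ball s ρ \ {s}) := fun t ht =>
    (hball t ht.1 ht.2).differentiableWithinAt
  have hderiv : DifferentiableOn ℂ (deriv u) (ball s ρ) := by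
    intro t ht
    by_cases hts : t = s
    · rw [hts]
      exact hd.differentiableWithinAt
    · exact ((hdiff.deriv hopen).differentiableAt
        (hopen.mem_nhds ⟨ht, hts⟩)).differentiableWithinAt
  obtain ⟨g, hg⟩ := hderiv.isExactOn_ball
  have hsub : ∀ t ∈ ball s ρ \ {s}, HasDerivAt (fun t => u t - g t) 0 t := fun t ht =>
    ((hball t ht.1 ht.2).hasDerivAt.sub (hg t ht.1)).congr_deriv (sub_self _)
  obtain ⟨c, hc⟩ := hopen.exists_is_const_of_deriv_eq_zero (isPreconnected_ball_diff_center s hρ)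
    (fun t ht => (hsub t ht).differentiableAt.differentiableWithinAt)
    (fun t ht => (hsub t ht).deriv)
  refine ⟨fun t => g t + c, ?_, ?_⟩
  · filter_upwards [ball_mem_nhds s hρ] with t ht
    exact (hg t ht).add_const c
  · refine eventually_nhdsWithin_iff.mpr ?_
    filter_upwards [ball_mem_nhds s hρ] with t ht hts
    linear_combination hc t ⟨ht, hts⟩

lemma differentiableAt_of_painleve {u : ℂ → ℂ}
    (hode : ∀ s, u s ≠ 0 →
      deriv (deriv u) s = deriv u s ^ 2 / (2 * u s) + painleveCubic s (u s + 2 * s))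
    {s : ℂ} {M : ℝ} (hM : 0 < M) (hs : 4 * M ≤ ‖s‖) (h₀ : u s + 2 * s ≠ 0)
    (hle : ‖u s + 2 * s‖ ≤ M) (hfreq : ∃ᶠ t in 𝓝[≠] s, ‖u t + 2 * t‖ ≤ M) :
    DifferentiableAt ℂ u s := by
  have hne : ∀ x : ℂ, ‖x + 2 * s‖ ≤ M → x ≠ 0 := by
    rintro x hx rfl
    simp at hx
    linarith
  by_contra hnd
  have hd0 : deriv u s = 0 := deriv_zero_of_not_differentiableAt hnd
  have hdd := hode s (hne _ hle)
  rw [hd0] at hdd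
  simp only [ne_eq, OfNat.ofNat_ne_zero, not_false_eq_true, zero_pow, zero_div, zero_add] at hdd
  have hL : deriv (deriv u) s ≠ 0 := by
    intro h
    refine h₀ (painleveCubic_inj hM hs hle (w₂ := 0) (by simpa using hM.le) ?_)
    rw [← hdd, h]
    simp [painleveCubic]
  have hdiff : DifferentiableAt ℂ (deriv u) s := by
    by_contra h
    exact hL (deriv_zero_of_not_differentiableAt h)
  have hpunct : ∀ᶠ t in 𝓝[≠] s, DifferentiableAt ℂ u t := by
    filter_upwards [hdiff.hasDerivAt.eventually_ne (c := 0) hL] with t ht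
    by_contra h
    exact ht (deriv_zero_of_not_differentiableAt h)
  obtain ⟨v, hv, huv⟩ := exists_primitive_of_punctured hpunct hdiff
  have hvc : ContinuousAt v s := hv.self_of_nhds.continuousAt
  have hvle : ‖v s + 2 * s‖ ≤ M := by
    by_contra! h
    have hcont : ContinuousAt (fun t => ‖v t + 2 * t‖) s := by fun_prop
    have hlt := (hcont.eventually (lt_mem_nhds h)).filter_mono (nhdsWithin_le_nhds (s := {s}ᶜ))
    obtain ⟨t, ht, ht', hut⟩ := (hfreq.and_eventually (hlt.and huv)).exists
    rw [hut] at ht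
    exact absurd ht (not_le.mpr ht')
  have hvan : AnalyticAt ℂ v s := by
    rw [analyticAt_iff_eventually_differentiableAt]
    exact hv.mono fun t ht => ht.differentiableAt
  have hdv : deriv u =ᶠ[𝓝 s] deriv v := hv.mono fun t ht => ht.deriv.symm
  have huan : AnalyticAt ℂ (deriv u) s := hvan.deriv.congr hdv.symm
  have hv0 : v s ≠ 0 := hne _ hvle
  have hlim₁ : Tendsto (deriv (deriv u)) (𝓝[≠] s) (𝓝 (deriv (deriv u) s)) :=
    huan.deriv.continuousAt.continuousWithinAt
  have hlim₂ : Tendsto (deriv (deriv u)) (𝓝[≠] s) (𝓝 (painleveCubic s (v s + 2 * s))) := by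
    have hcont : ContinuousAt
        (fun t => deriv u t ^ 2 / (2 * v t) + painleveCubic t (v t + 2 * t)) s := by
      unfold painleveCubic
      have hduc : ContinuousAt (deriv u) s := hdiff.continuousAt
      have : 2 * v s ≠ 0 := by simpa using hv0
      fun_prop (disch := assumption)
    have hval := hcont.tendsto.mono_left (nhdsWithin_le_nhds (s := {s}ᶜ))
    rw [hd0] at hval
    simp only [ne_eq, OfNat.ofNat_ne_zero, not_false_eq_true, zero_pow, zero_div,
      zero_add] at hval
    refine hval.congr' ?_
    filter_upwards [huv, (hvc.eventually_ne hv0).filter_mono nhdsWithin_le_nhds] with t ht ht0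
    rw [hode t (ht ▸ ht0), ht]
  have hcubic : painleveCubic s (v s + 2 * s) = painleveCubic s (u s + 2 * s) :=
    (tendsto_nhds_unique hlim₂ hlim₁).trans hdd
  have hvu : v s = u s := add_right_cancel (painleveCubic_inj hM hs hvle hle hcubic)
  have heq : u =ᶠ[𝓝 s] v := by
    filter_upwards [eventually_nhdsWithin_iff.mp huv] with t ht
    by_cases hts : t = s
    · rw [hts, hvu]
    · exact ht hts
  exact hnd (hvan.differentiableAt.congr_of_eventuallyEq heq)

/-! ### Power orders at infinity -/

lemma isBigO_zpow_mono {f : ℝ → ℂ} {j k : ℤ} (hf : f =O[atTop] fun r : ℝ => r ^ j) (h : j ≤ k) :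
    f =O[atTop] fun r : ℝ => r ^ k := by
  refine hf.trans (IsBigO.of_bound 1 ?_)
  filter_upwards [eventually_ge_atTop 1] with r hr
  rw [one_mul, Real.norm_of_nonneg (by positivity), Real.norm_of_nonneg (by positivity)]
  exact zpow_le_zpow_right₀ hr h

lemma isBigO_zpow_mul {f g : ℝ → ℂ} {j k : ℤ} (l : ℤ) (hf : f =O[atTop] fun r : ℝ => r ^ j)
    (hg : g =O[atTop] fun r : ℝ => r ^ k) (h : j + k ≤ l) :
    (fun r => f r * g r) =O[atTop] fun r : ℝ => r ^ l := by
  refine isBigO_zpow_mono ((hf.mul hg).congr' .rfl ?_) h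
  filter_upwards [eventually_gt_atTop 0] with r hr
  exact (zpow_add₀ hr.ne' j k).symm

lemma isBigO_zpow_const (c : ℂ) {k : ℤ} (h : 0 ≤ k) :
    (fun _ : ℝ => c) =O[atTop] fun r : ℝ => r ^ k :=
  isBigO_zpow_mono (j := 0) (by simpa using isBigO_const_const c (one_ne_zero (α := ℝ)) _) h

lemma exists_norm_le_of_isBigO_zpow {f : ℝ → ℂ} {k : ℤ} (hf : f =O[atTop] fun r : ℝ => r ^ k) :
    ∃ C > 0, ∀ᶠ r : ℝ in atTop, ‖f r‖ ≤ C * r ^ k := by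
  obtain ⟨C, hC, h⟩ := hf.exists_pos
  refine ⟨C, hC, ?_⟩
  filter_upwards [h.bound, eventually_gt_atTop 0] with r hr hr0
  rwa [Real.norm_of_nonneg (by positivity)] at hr

lemma isBigO_zpow_one_of_deriv {f f' : ℝ → ℂ} (hd : ∀ᶠ r in atTop, HasDerivAt f (f' r) r)
    (hf' : f' =O[atTop] fun r : ℝ => r ^ (0 : ℤ)) : f =O[atTop] fun r : ℝ => r ^ (1 : ℤ) := by
  obtain ⟨C, hC, hbound⟩ := exists_norm_le_of_isBigO_zpow hf'
  obtain ⟨R, hR⟩ := eventually_atTop.mp (hd.and (hbound.and (eventually_ge_atTop 1)))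
  have hR1 : 1 ≤ R := (hR R le_rfl).2.2
  refine IsBigO.of_bound (‖f R‖ + C) ?_
  filter_upwards [eventually_ge_atTop R] with r hr
  have hmv := (convex_Ici R).norm_image_sub_le_of_norm_hasDerivWithin_le
    (fun t ht => (hR t ht).1.hasDerivWithinAt)
    (fun t ht => by simpa using (hR t ht).2.1) (Set.self_mem_Ici (a := R)) hr
  rw [Real.norm_of_nonneg (sub_nonneg.mpr hr)] at hmv
  have htri : ‖f r‖ ≤ ‖f r - f R‖ + ‖f R‖ := by simpa using norm_add_le (f r - f R) (f R)
  rw [zpow_one, Real.norm_of_nonneg (by linarith)]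
  nlinarith [norm_nonneg (f R)]

lemma isBigO_zpow_neg_two_of_deriv {f f' : ℝ → ℂ}
    (hd : ∀ᶠ r in atTop, HasDerivAt f (f' r) r)
    (hf' : f' =O[atTop] fun r : ℝ => r ^ (-3 : ℤ)) (hf : Tendsto f atTop (𝓝 0)) :
    f =O[atTop] fun r : ℝ => r ^ (-2 : ℤ) := by
  obtain ⟨C, hC, hbound⟩ := exists_norm_le_of_isBigO_zpow hf'
  obtain ⟨R, hR⟩ := eventually_atTop.mp (hd.and (hbound.and (eventually_ge_atTop 1)))
  refine IsBigO.of_bound (C / 2) ?_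
  filter_upwards [eventually_ge_atTop R] with r hr
  have hr1 : 1 ≤ r := (hR r hr).2.2
  rw [Real.norm_of_nonneg (by positivity)]
  have hsub : ∀ T ≥ r, ‖f T - f r‖ ≤ C / 2 * r ^ (-2 : ℤ) := by
    intro T hT
    have hB : ∀ t ∈ Set.Icc r T, HasDerivAt (fun t : ℝ => C / 2 * (r ^ (-2 : ℤ) - t ^ (-2 : ℤ)))
        (C * t ^ (-3 : ℤ)) t := by
      intro t ht
      have ht0 : t ≠ 0 := by linarith [ht.1]
      refine (((hasDerivAt_zpow (-2) t (Or.inl ht0)).const_sub _).const_mul _).congr_deriv ?_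
      norm_num
      ring
    have hcmp := image_norm_le_of_norm_deriv_right_le_deriv_boundary'
      (f := fun t => f t - f r) (f' := f') (a := r) (b := T)
      (fun t ht => ((hR t (hr.trans ht.1)).1.sub_const _).continuousAt.continuousWithinAt)
      (fun t ht => ((hR t (hr.trans ht.1)).1.sub_const _).hasDerivWithinAt)
      (by simp) (fun t ht => (hB t ht).continuousAt.continuousWithinAt)
      (fun t ht => (hB t ⟨ht.1, ht.2.le⟩).hasDerivWithinAt)
      (fun t ht => (hR t (hr.trans ht.1)).2.1) (Set.right_mem_Icc.mpr hT)
    refine hcmp.trans ?_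
    have : 0 ≤ T ^ (-2 : ℤ) := zpow_nonneg (by linarith) _
    gcongr
    linarith
  have hlim : Tendsto (fun T => ‖f T - f r‖) atTop (𝓝 ‖f r‖) := by
    simpa using (hf.sub_const (f r)).norm
  exact le_of_tendsto hlim (eventually_atTop.mpr ⟨r, hsub⟩)

/-- A Landau-type interpolation inequality. -/
lemma norm_deriv_le_of_norm_le {f g g' : ℝ → ℂ} {r h A B : ℝ} (hh : 0 < h)
    (hf : ∀ t ∈ Set.Icc r (r + h), HasDerivAt f (g t) t)
    (hg : ∀ t ∈ Set.Icc r (r + h), HasDerivAt g (g' t) t)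
    (hfr : ‖f r‖ ≤ A) (hfh : ‖f (r + h)‖ ≤ A) (hB : ∀ t ∈ Set.Icc r (r + h), ‖g' t‖ ≤ B) :
    ‖g r‖ ≤ 2 * A / h + B * h := by
  have hl : r ∈ Set.Icc r (r + h) := Set.left_mem_Icc.mpr (by linarith)
  have hr : r + h ∈ Set.Icc r (r + h) := Set.right_mem_Icc.mpr (by linarith)
  have hB0 : 0 ≤ B := (norm_nonneg _).trans (hB r hl)
  have hslow : ∀ t ∈ Set.Icc r (r + h), ‖g t - g r‖ ≤ B * h := by
    intro t ht
    have := (convex_Icc r (r + h)).norm_image_sub_le_of_norm_hasDerivWithin_le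
      (fun t ht => (hg t ht).hasDerivWithinAt) hB hl ht
    rw [Real.norm_of_nonneg (by linarith [ht.1])] at this
    refine this.trans ?_
    gcongr
    linarith [ht.2]
  have hlin := (convex_Icc r (r + h)).norm_image_sub_le_of_norm_hasDerivWithin_le
    (f := fun t => f t - ((t : ℂ) - r) * g r) (f' := fun t => g t - g r) (C := B * h)
    (fun t ht => (((hf t ht).sub
      ((((hasDerivAt_id t).ofReal_comp).sub_const (r : ℂ)).mul_const (g r))).congr_deriv
        (by simp)).hasDerivWithinAt) hslow hl hr
  have hgr : (h : ℂ) * g r = f (r + h) - f r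
      - ((f (r + h) - (((r + h : ℝ) : ℂ) - r) * g r) - (f r - ((r : ℂ) - r) * g r)) := by
    push_cast
    ring
  have hnorm : h * ‖g r‖ ≤ A + A + B * h * h := by
    calc h * ‖g r‖ = ‖(h : ℂ) * g r‖ := by
          rw [norm_mul, Complex.norm_real, Real.norm_of_nonneg hh.le]
      _ ≤ ‖f (r + h)‖ + ‖f r‖ + B * h * h := by
        rw [hgr]
        refine (norm_sub_le _ _).trans (add_le_add (norm_sub_le _ _) ?_)
        simpa [Real.norm_of_nonneg hh.le, abs_of_pos hh] using hlin
      _ ≤ _ := by gcongr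
  have : 2 * A / h + B * h = (A + A + B * h * h) / h := by
    field_simp
    ring
  rw [this, le_div_iff₀ hh]
  linarith

lemma le_of_self_improving {g : ℝ → ℝ} {R C D : ℝ} (hR : 0 < R) (hC : 0 ≤ C) (hg : ∀ r, 0 ≤ g r)
    (hD : ∀ r ≥ R, g r ≤ D * r)
    (himp : ∀ μ ≥ 0, ∀ r ≥ R, (∀ t ≥ r, g t ≤ μ * t) → g r ≤ μ * r / 2 + C) :
    ∀ r ≥ R, g r ≤ 2 * C := by
  intro r hr
  have hr0 : 0 < r := hR.trans_le hr
  have hbdd : BddAbove ((fun t => g t / t) '' Set.Ici r) := by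
    refine ⟨D, ?_⟩
    rintro _ ⟨t, ht, rfl⟩
    exact (div_le_iff₀ (hr0.trans_le ht)).mpr (hD t (hr.trans ht))
  set m := sSup ((fun t => g t / t) '' Set.Ici r)
  have hm : ∀ t ≥ r, g t ≤ m * t := fun t ht =>
    (div_le_iff₀ (hr0.trans_le ht)).mp (le_csSup hbdd ⟨t, ht, rfl⟩)
  have hm0 : 0 ≤ m :=
    (div_nonneg (hg r) hr0.le).trans (le_csSup hbdd ⟨r, Set.self_mem_Ici, rfl⟩)
  have hmle : m ≤ m / 2 + C / r := by
    refine csSup_le (Set.nonempty_Ici.image _) ?_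
    rintro _ ⟨t, ht, rfl⟩
    have ht0 : 0 < t := hr0.trans_le ht
    have hgt := himp m hm0 t (hr.trans ht) fun t' ht' => hm t' (le_trans ht ht')
    have hCt : C / t ≤ C / r := div_le_div_of_nonneg_left hC hr0 ht
    have : g t / t ≤ m / 2 + C / t := by
      rw [div_le_iff₀ ht0]
      field_simp
      linarith
    exact this.trans (by linarith)
  have hmr : m * r ≤ 2 * C := by
    have : m ≤ 2 * C / r := by
      have : 2 * C / r = 2 * (C / r) := by ring
      linarith
    exact (le_div_iff₀ hr0).mp this
  exact (hm r le_rfl).trans hmr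

/-! ### The Hamiltonian system along a ray -/

lemma norm_eq_one_of_sq_eq_neg_I {ω : ℂ} (hω : ω ^ 2 = -I) : ‖ω‖ = 1 := by
  have hsq : ‖ω‖ ^ 2 = 1 := by rw [← norm_pow, hω]; simp
  exact (pow_eq_one_iff_of_nonneg (norm_nonneg _) two_ne_zero).mp hsq

lemma norm_exp_neg_sq_of_sq_eq_neg_I {ω : ℂ} (hω : ω ^ 2 = -I) (r : ℝ) :
    ‖exp (-(r * ω) ^ 2)‖ = 1 := by
  rw [mul_pow, hω, norm_exp]
  simp [← ofReal_pow]

/-- The Painlevé IV Hamiltonian system (`Θ = 0`, `Θ_∞ = 1/2`) along the ray `s = rω`, in the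
variables `w = u + 2s` and `y = z - 1/2`, for large `r`, with `w = a e^{-s²} + O(s⁻¹)`. -/
structure IsRaySolution (ω a : ℂ) (u w y : ℝ → ℂ) : Prop where
  dir_sq : ω ^ 2 = -I
  u_eq : ∀ r : ℝ, u r = w r - 2 * (r * ω)
  hasDerivAt_w : ∀ᶠ r in atTop, HasDerivAt w (ω * (u r * w r - 4 * y r)) r
  hasDerivAt_y : ∀ᶠ r in atTop,
    HasDerivAt y (ω * (-2 * (y r + 1 / 2) ^ 2 / u r - u r * y r)) r
  isBigO_sub : (fun r : ℝ => w r - a * exp (-(r * ω) ^ 2)) =O[atTop] fun r : ℝ => r ^ (-1 : ℤ)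

namespace IsRaySolution

variable {ω a : ℂ} {u w y : ℝ → ℂ}

lemma norm_dir (h : IsRaySolution ω a u w y) : ‖ω‖ = 1 :=
  norm_eq_one_of_sq_eq_neg_I h.dir_sq

lemma dir_ne_zero (h : IsRaySolution ω a u w y) : ω ≠ 0 := by
  rw [← norm_pos_iff, h.norm_dir]
  exact one_pos

lemma norm_exp_neg_sq (h : IsRaySolution ω a u w y) (r : ℝ) : ‖exp (-(r * ω) ^ 2)‖ = 1 :=
  norm_exp_neg_sq_of_sq_eq_neg_I h.dir_sq r

lemma norm_exp_sq (h : IsRaySolution ω a u w y) (r : ℝ) : ‖exp ((r * ω) ^ 2)‖ = 1 := by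
  rw [← inv_inj, ← norm_inv, ← exp_neg, h.norm_exp_neg_sq, inv_one]

lemma isBigO_dir (h : IsRaySolution ω a u w y) :
    (fun r : ℝ => (r : ℂ) * ω) =O[atTop] fun r : ℝ => r ^ (1 : ℤ) :=
  IsBigO.of_bound 1 (.of_forall fun r => by simp [h.norm_dir])

lemma isBigO_dir_inv (h : IsRaySolution ω a u w y) :
    (fun r : ℝ => ((r : ℂ) * ω)⁻¹) =O[atTop] fun r : ℝ => r ^ (-1 : ℤ) :=
  IsBigO.of_bound 1 (.of_forall fun r => by simp [h.norm_dir])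

lemma isBigO_exp (h : IsRaySolution ω a u w y) :
    (fun r : ℝ => exp ((r * ω) ^ 2)) =O[atTop] fun r : ℝ => r ^ (0 : ℤ) :=
  IsBigO.of_bound 1 (.of_forall fun r => by simp [h.norm_exp_sq])

lemma isBigO_exp_neg (h : IsRaySolution ω a u w y) :
    (fun r : ℝ => exp (-(r * ω) ^ 2)) =O[atTop] fun r : ℝ => r ^ (0 : ℤ) :=
  IsBigO.of_bound 1 (.of_forall fun r => by simp [h.norm_exp_neg_sq])

lemma isBigO_w (h : IsRaySolution ω a u w y) : w =O[atTop] fun r : ℝ => r ^ (0 : ℤ) := by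
  have := (isBigO_zpow_mono h.isBigO_sub (by norm_num : (-1 : ℤ) ≤ 0)).add
    (h.isBigO_exp_neg.const_mul_left a)
  simpa using this

lemma isBigO_u (h : IsRaySolution ω a u w y) : u =O[atTop] fun r : ℝ => r ^ (1 : ℤ) := by
  rw [funext h.u_eq]
  exact (isBigO_zpow_mono h.isBigO_w (by norm_num)).sub (h.isBigO_dir.const_mul_left 2)

lemma eventually_le_norm_u (h : IsRaySolution ω a u w y) : ∀ᶠ r : ℝ in atTop, r ≤ ‖u r‖ := by
  obtain ⟨C, hC, hbound⟩ := exists_norm_le_of_isBigO_zpow h.isBigO_w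
  filter_upwards [hbound, eventually_ge_atTop C, eventually_ge_atTop 0] with r hr hrC hr0
  have h₁ : ‖2 * ((r : ℂ) * ω)‖ = 2 * r := by simp [h.norm_dir, abs_of_nonneg hr0]
  have h₂ := norm_sub_norm_le (2 * ((r : ℂ) * ω)) (w r)
  rw [norm_sub_rev, ← h.u_eq, h₁] at h₂
  rw [zpow_zero, mul_one] at hr
  linarith

lemma eventually_u_ne_zero (h : IsRaySolution ω a u w y) : ∀ᶠ r : ℝ in atTop, u r ≠ 0 := by
  filter_upwards [h.eventually_le_norm_u, eventually_gt_atTop 0] with r hr hr0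
  exact norm_pos_iff.mp (hr0.trans_le hr)

lemma isBigO_u_inv (h : IsRaySolution ω a u w y) :
    (fun r => (u r)⁻¹) =O[atTop] fun r : ℝ => r ^ (-1 : ℤ) := by
  refine IsBigO.of_bound 1 ?_
  filter_upwards [h.eventually_le_norm_u, eventually_gt_atTop 0] with r hr hr0
  rw [one_mul, norm_inv, zpow_neg_one, norm_inv, Real.norm_of_nonneg hr0.le]
  exact inv_anti₀ hr0 hr

lemma hasDerivAt_dir (ω : ℂ) (r : ℝ) : HasDerivAt (fun r : ℝ => (r : ℂ) * ω) ω r :=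
  (((hasDerivAt_id r).ofReal_comp).mul_const ω).congr_deriv (by simp)

lemma hasDerivAt_exp (ω : ℂ) (r : ℝ) :
    HasDerivAt (fun r : ℝ => exp ((r * ω) ^ 2)) (ω * (2 * (r * ω) * exp ((r * ω) ^ 2))) r :=
  (((hasDerivAt_dir ω r).pow 2).cexp).congr_deriv (by simp; ring)

lemma hasDerivAt_exp_neg (ω : ℂ) (r : ℝ) :
    HasDerivAt (fun r : ℝ => exp (-(r * ω) ^ 2))
      (ω * (-2 * (r * ω) * exp (-(r * ω) ^ 2))) r :=
  ((((hasDerivAt_dir ω r).pow 2).neg).cexp).congr_deriv (by simp; ring)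

lemma hasDerivAt_u (h : IsRaySolution ω a u w y) :
    ∀ᶠ r in atTop, HasDerivAt u (ω * (u r * w r - 4 * y r - 2)) r := by
  filter_upwards [h.hasDerivAt_w] with r hr
  rw [funext h.u_eq] at hr ⊢
  exact (hr.sub ((hasDerivAt_dir ω r).const_mul 2)).congr_deriv (by ring)

/-- The Hamiltonian, up to a bounded term, has bounded derivative along the ray. -/
lemma isBigO_hamiltonian_aux (h : IsRaySolution ω a u w y) :
    (fun r : ℝ => 16 * ((y r + 1 / 2) ^ 2 / u r - w r * y r / 2) - 4 * w r
      + 4 * (a * exp (-(r * ω) ^ 2))) =O[atTop] fun r : ℝ => r ^ (1 : ℤ) := by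
  refine isBigO_zpow_one_of_deriv
    (f' := fun r => ω * (8 * ((r * ω) * (w r - a * exp (-(r * ω) ^ 2))) - 4 * (w r * w r))) ?_ ?_
  · filter_upwards [h.hasDerivAt_w, h.hasDerivAt_y, h.hasDerivAt_u, h.eventually_u_ne_zero]
      with r hw hy hu hne
    refine (((((((hy.add_const (1 / 2)).pow 2).div hu hne).sub ((hw.mul hy).div_const 2)).const_mul
      16).sub (hw.const_mul 4)).add
        (((hasDerivAt_exp_neg ω r).const_mul a).const_mul 4)).congr_deriv ?_
    have hs : (r : ℂ) * ω = (w r - u r) / 2 := by rw [h.u_eq]; ring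
    rw [hs]
    simp
    field_simp
    ring
  · refine IsBigO.const_mul_left (IsBigO.sub ?_ ?_) ω
    · exact (isBigO_zpow_mul 0 h.isBigO_dir h.isBigO_sub (by norm_num)).const_mul_left 8
    · exact (isBigO_zpow_mul 0 h.isBigO_w h.isBigO_w (by norm_num)).const_mul_left 4

lemma isBigO_y_one (h : IsRaySolution ω a u w y) : y =O[atTop] fun r : ℝ => r ^ (1 : ℤ) := by
  set T : ℝ → ℂ := fun r => 16 * ((y r + 1 / 2) ^ 2 / u r - w r * y r / 2) with hT
  have hTO : T =O[atTop] fun r : ℝ => r ^ (1 : ℤ) := by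
    have := (h.isBigO_hamiltonian_aux.add
      ((isBigO_zpow_mono h.isBigO_w (by norm_num : (0 : ℤ) ≤ 1)).const_mul_left 4)).sub
      (((isBigO_zpow_mono h.isBigO_exp_neg (by norm_num : (0 : ℤ) ≤ 1)).const_mul_left
        a).const_mul_left 4)
    exact this.congr_left fun r => by simp only [hT]; ring
  obtain ⟨C₁, hC₁, h₁⟩ := exists_norm_le_of_isBigO_zpow
    (isBigO_zpow_mul 2 h.isBigO_u hTO (by norm_num))
  obtain ⟨C₂, hC₂, h₂⟩ := exists_norm_le_of_isBigO_zpow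
    (isBigO_zpow_mul 1 h.isBigO_u h.isBigO_w (by norm_num))
  refine IsBigO.of_bound (C₁ + 2 * C₂ + 2) ?_
  filter_upwards [h₁, h₂, h.eventually_u_ne_zero, eventually_ge_atTop 1] with r hr₁ hr₂ hne hr
  rw [zpow_one, Real.norm_of_nonneg (by linarith)]
  rw [zpow_one] at hr₂
  rw [zpow_ofNat] at hr₁
  have heq : 16 * (y r + 1 / 2) ^ 2 = u r * T r + 8 * (u r * w r) * (y r + 1 / 2)
      - 4 * (u r * w r) := by
    simp only [hT]
    field_simp
    ring
  have hy : ‖y r‖ ≤ ‖y r + 1 / 2‖ + 1 / 2 := by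
    have := norm_sub_le (y r + 1 / 2) (1 / 2)
    simpa using this
  have hq : 16 * ‖y r + 1 / 2‖ ^ 2
      ≤ C₁ * r ^ 2 + 8 * (C₂ * r) * ‖y r + 1 / 2‖ + 4 * (C₂ * r) := by
    calc 16 * ‖y r + 1 / 2‖ ^ 2 = ‖16 * (y r + 1 / 2) ^ 2‖ := by simp
      _ ≤ ‖u r * T r‖ + 8 * ‖u r * w r‖ * ‖y r + 1 / 2‖ + 4 * ‖u r * w r‖ := by
        rw [heq]
        refine (norm_sub_le _ _).trans (add_le_add ((norm_add_le _ _).trans ?_) ?_)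
        · simp
        · simp
      _ ≤ _ := by gcongr
  have hqle : ‖y r + 1 / 2‖ ≤ (C₁ + 2 * C₂ + 1) * r := by
    by_contra! hlt
    set q := ‖y r + 1 / 2‖
    have hqr : r ≤ q := by nlinarith
    have hq0 : 0 < q := by linarith
    have e₁ : C₁ * r ^ 2 ≤ C₁ * r * q := by nlinarith [mul_nonneg hC₁.le (by linarith : 0 ≤ r)]
    have e₂ : C₂ * r ≤ C₂ * r * q := by
      nlinarith [mul_nonneg hC₂.le (by linarith : 0 ≤ r)]
    have e₃ : (C₁ + 2 * C₂ + 1) * r * q < q * q := by nlinarith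
    nlinarith [mul_nonneg (mul_nonneg hC₁.le (by linarith : 0 ≤ r)) hq0.le,
      mul_nonneg (mul_nonneg hC₂.le (by linarith : 0 ≤ r)) hq0.le]
  nlinarith

/-- Interpolation between `w - a e^{-s²} = O(s⁻¹)` and the second derivative improves the
a priori bound on `y`. -/
lemma isBigO_y_zero (h : IsRaySolution ω a u w y) : y =O[atTop] fun r : ℝ => r ^ (0 : ℤ) := by
  set f : ℝ → ℂ := fun r => exp ((r * ω) ^ 2) * w r - a with hf
  set g : ℝ → ℂ := fun r => ω * (exp ((r * ω) ^ 2) * (w r ^ 2 - 4 * y r)) with hg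
  set p : ℝ → ℂ := fun r => ω * (ω * (exp ((r * ω) ^ 2) * (2 * (r * ω) * w r ^ 2
    + 2 * u r * w r ^ 2 + 2 / u r))) with hp
  set q : ℝ → ℂ := fun r => ω * (ω * (exp ((r * ω) ^ 2) * (-8 * (r * ω) - 8 * w r
    + 8 * (y r + 1) / u r + 4 * u r))) with hq
  have hfd : ∀ᶠ r in atTop, HasDerivAt f (g r) r := by
    filter_upwards [h.hasDerivAt_w] with r hw
    refine (((hasDerivAt_exp ω r).mul hw).sub_const a).congr_deriv ?_
    simp only [hg, h.u_eq]
    ring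
  have hgd : ∀ᶠ r in atTop, HasDerivAt g (p r + q r * y r) r := by
    filter_upwards [h.hasDerivAt_w, h.hasDerivAt_y, h.eventually_u_ne_zero] with r hw hy hne
    refine (((hasDerivAt_exp ω r).mul ((hw.pow 2).sub (hy.const_mul 4))).const_mul ω).congr_deriv ?_
    simp only [hp, hq]
    simp
    field_simp
    ring
  have hexp := h.isBigO_exp
  have hfO : f =O[atTop] fun r : ℝ => r ^ (-1 : ℤ) := by
    refine (isBigO_zpow_mul (-1) hexp h.isBigO_sub (by norm_num)).congr_left fun r => ?_
    have hinv : exp ((r * ω) ^ 2) * exp (-(r * ω) ^ 2) = 1 := by rw [← exp_add]; simp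
    simp only [hf]
    linear_combination -a * hinv
  have hw2 : (fun r => w r ^ 2) =O[atTop] fun r : ℝ => r ^ (0 : ℤ) :=
    (isBigO_zpow_mul 0 h.isBigO_w h.isBigO_w (by norm_num)).congr_left fun r => by ring
  have huinv := h.isBigO_u_inv
  have hpO : p =O[atTop] fun r : ℝ => r ^ (1 : ℤ) := by
    refine ((isBigO_zpow_mul 1 hexp (IsBigO.add (IsBigO.add ?_ ?_) ?_)
      (by norm_num : (0 : ℤ) + 1 ≤ 1)).const_mul_left ω).const_mul_left ω
    · exact isBigO_zpow_mul 1 (h.isBigO_dir.const_mul_left 2) hw2 (by norm_num)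
    · exact isBigO_zpow_mul 1 (h.isBigO_u.const_mul_left 2) hw2 (by norm_num)
    · exact isBigO_zpow_mono (huinv.const_mul_left 2) (by norm_num)
  have hqO : q =O[atTop] fun r : ℝ => r ^ (1 : ℤ) := by
    refine ((isBigO_zpow_mul 1 hexp (IsBigO.add (IsBigO.add (IsBigO.sub ?_ ?_) ?_) ?_)
      (by norm_num : (0 : ℤ) + 1 ≤ 1)).const_mul_left ω).const_mul_left ω
    · exact h.isBigO_dir.const_mul_left (-8)
    · exact isBigO_zpow_mono (h.isBigO_w.const_mul_left 8) (by norm_num)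
    · exact isBigO_zpow_mul 1
        ((h.isBigO_y_one.add (isBigO_zpow_const 1 (by norm_num))).const_mul_left 8) huinv
        (by norm_num)
    · exact h.isBigO_u.const_mul_left 4
  obtain ⟨A, hA, hfA⟩ := exists_norm_le_of_isBigO_zpow hfO
  obtain ⟨P, hP, hpP⟩ := exists_norm_le_of_isBigO_zpow hpO
  obtain ⟨Q, hQ, hqQ⟩ := exists_norm_le_of_isBigO_zpow hqO
  obtain ⟨W, hW, hwW⟩ := exists_norm_le_of_isBigO_zpow hw2
  obtain ⟨D, hD, hyD⟩ := exists_norm_le_of_isBigO_zpow h.isBigO_y_one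
  obtain ⟨R, hR⟩ := eventually_atTop.mp (hfd.and (hgd.and (hfA.and (hpP.and (hqQ.and
    (hwW.and (hyD.and (eventually_ge_atTop 1))))))))
  choose! hfd hgd hfA hpP hqQ hwW hyD hone using hR
  simp only [zpow_one, zpow_zero, mul_one, zpow_neg_one] at hfA hpP hqQ hwW hyD
  set ε : ℝ := min 1 (1 / (4 * Q)) with hε
  have hε0 : 0 < ε := by positivity
  have hε1 : ε ≤ 1 := min_le_left _ _
  have hεQ : ε * Q ≤ 1 / 4 := by
    calc ε * Q ≤ 1 / (4 * Q) * Q := by gcongr; exact min_le_right _ _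
      _ = 1 / 4 := by field_simp
  have hbound := le_of_self_improving (g := fun r => ‖y r‖) (R := R) (D := D)
    (C := 2 * A / ε + 2 * P + W) (by linarith [hone R le_rfl]) (by positivity)
    (fun _ => norm_nonneg _) hyD ?_
  · refine IsBigO.of_bound (2 * (2 * A / ε + 2 * P + W)) ?_
    filter_upwards [eventually_ge_atTop R] with r hr
    simpa using hbound r hr
  intro μ hμ r hr hμy
  have hr1 : 1 ≤ r := hone r hr
  have hr0 : 0 < r := by linarith
  have hh : 0 < ε / r := by positivity
  have hh2 : r + ε / r ≤ 2 * r := by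
    have : ε / r ≤ 1 := (div_le_one hr0).mpr (by linarith)
    linarith
  have hlandau := norm_deriv_le_of_norm_le (f := f) (g := g) (g' := fun t => p t + q t * y t)
    (r := r) (h := ε / r) (A := A * r⁻¹) (B := 2 * P * r + 2 * Q * r * (μ * (2 * r))) hh
    (fun t ht => hfd t (hr.trans ht.1)) (fun t ht => hgd t (hr.trans ht.1)) (hfA r hr)
    ((hfA _ (by linarith)).trans (by gcongr; linarith)) ?_
  · have hgy : 4 * ‖y r‖ ≤ ‖g r‖ + W := by
      have hgn : ‖g r‖ = ‖w r ^ 2 - 4 * y r‖ := by simp [hg, h.norm_dir, h.norm_exp_sq]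
      have := norm_sub_norm_le (4 * y r) (w r ^ 2)
      rw [norm_sub_rev, ← hgn, norm_mul, Complex.norm_ofNat] at this
      linarith [hwW r hr]
    have e₁ : 2 * (A * r⁻¹) / (ε / r) = 2 * A / ε := by field_simp
    have e₂ : (2 * P * r + 2 * Q * r * (μ * (2 * r))) * (ε / r)
        = 2 * P * ε + 4 * (ε * Q) * (μ * r) := by field_simp; ring
    rw [e₁, e₂] at hlandau
    have e₃ : 4 * (ε * Q) * (μ * r) ≤ μ * r := by
      have : 0 ≤ μ * r := by positivity
      nlinarith
    have e₄ : 2 * P * ε ≤ 2 * P := by nlinarith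
    have e₅ : 0 < 2 * A / ε := by positivity
    have e₆ : 0 ≤ μ * r := by positivity
    linarith
  · intro t ht
    have htr : t ≤ 2 * r := ht.2.trans hh2
    have ht0 : 0 ≤ t := by linarith [ht.1]
    calc ‖p t + q t * y t‖ ≤ ‖p t‖ + ‖q t‖ * ‖y t‖ := by
          rw [← norm_mul]; exact norm_add_le _ _
      _ ≤ P * t + Q * t * (μ * t) := by
        gcongr
        · exact hpP t (hr.trans ht.1)
        · exact hqQ t (hr.trans ht.1)
        · exact hμy t ht.1
      _ ≤ P * (2 * r) + Q * (2 * r) * (μ * (2 * r)) := by gcongr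
      _ = _ := by ring

/-- Removing the leading forced and quadratic terms from `u y` leaves a multiple of the
homogeneous solution `s² e^{s²}`, up to an integrable error; that multiple vanishes. -/
lemma isBigO_u_mul_y (h : IsRaySolution ω a u w y) :
    (fun r => u r * y r) =O[atTop] fun r : ℝ => r ^ (0 : ℤ) := by
  have hy := h.isBigO_y_zero
  have hw := h.isBigO_w
  have hui := h.isBigO_u_inv
  have hsi := h.isBigO_dir_inv
  have hy2 := isBigO_zpow_mul 0 hy hy (by norm_num)
  have hui2 := isBigO_zpow_mul (-2) hui hui (by norm_num)
  have hsi2 := isBigO_zpow_mul (-2) hsi hsi (by norm_num)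
  have hcorr : (fun r : ℝ => (4 : ℂ)⁻¹ * (r * ω)⁻¹ + 6 * (y r * y r * (u r)⁻¹)) =O[atTop]
      fun r : ℝ => r ^ (-1 : ℤ) :=
    (hsi.const_mul_left 4⁻¹).add
      ((isBigO_zpow_mul (-1) hy2 hui (by norm_num)).const_mul_left 6)
  set X : ℝ → ℂ := fun r =>
    u r * y r - ((4 : ℂ)⁻¹ * (r * ω)⁻¹ + 6 * (y r * y r * (u r)⁻¹)) with hX
  set F : ℝ → ℂ := fun r => exp (-(r * ω) ^ 2) * ((r * ω)⁻¹ * (r * ω)⁻¹) with hF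
  set E : ℝ → ℂ := fun r => -2 * (y r * w r * (r * ω)⁻¹) + 3 / 4 * ((r * ω)⁻¹ * (r * ω)⁻¹)
    + 24 * (y r * ((y r + 1 / 2) * (y r + 1 / 2)) * ((u r)⁻¹ * (u r)⁻¹))
    + 6 * (y r * y r * (-4 * y r - 2) * ((u r)⁻¹ * (u r)⁻¹))
    + 12 * (y r * y r * w r * (u r)⁻¹) + 12 * (y r * y r * ((r * ω)⁻¹ * (u r)⁻¹)) with hE
  have hEO : E =O[atTop] fun r : ℝ => r ^ (-1 : ℤ) := by
    have hyh := hy.add (isBigO_zpow_const (1 / 2) le_rfl)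
    have hyl := (hy.const_mul_left (-4)).sub (isBigO_zpow_const 2 le_rfl)
    refine (((((IsBigO.const_mul_left ?_ _).add (IsBigO.const_mul_left ?_ _)).add
      (IsBigO.const_mul_left ?_ _)).add (IsBigO.const_mul_left ?_ _)).add
        (IsBigO.const_mul_left ?_ _)).add (IsBigO.const_mul_left ?_ _)
    · exact isBigO_zpow_mul _ (isBigO_zpow_mul 0 hy hw (by norm_num)) hsi (by norm_num)
    · exact isBigO_zpow_mono hsi2 (by norm_num)
    · exact isBigO_zpow_mul _ (isBigO_zpow_mul 0 hy (isBigO_zpow_mul 0 hyh hyh (by norm_num))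
        (by norm_num)) hui2 (by norm_num)
    · exact isBigO_zpow_mul _ (isBigO_zpow_mul 0 hy2 hyl (by norm_num)) hui2 (by norm_num)
    · exact isBigO_zpow_mul _ (isBigO_zpow_mul 0 hy2 hw (by norm_num)) hui (by norm_num)
    · exact isBigO_zpow_mul _ hy2 (isBigO_zpow_mul (-2) hsi hui (by norm_num)) (by norm_num)
  have hFO : F =O[atTop] fun r : ℝ => r ^ (-2 : ℤ) :=
    isBigO_zpow_mul (-2) h.isBigO_exp_neg hsi2 (by norm_num)
  have hXO : X =O[atTop] fun r : ℝ => r ^ (1 : ℤ) :=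
    (isBigO_zpow_mul 1 h.isBigO_u hy (by norm_num)).sub (isBigO_zpow_mono hcorr (by norm_num))
  have hderiv : ∀ᶠ r in atTop, HasDerivAt (fun r => F r * X r) (ω * (F r * E r)) r := by
    filter_upwards [h.hasDerivAt_y, h.hasDerivAt_u, h.eventually_u_ne_zero,
      eventually_gt_atTop 0] with r hyd hud hne hr
    have hs0 : (r : ℂ) * ω ≠ 0 := mul_ne_zero (by exact_mod_cast hr.ne') h.dir_ne_zero
    have hsd := (hasDerivAt_dir ω r).inv hs0
    refine (((hasDerivAt_exp_neg ω r).mul (hsd.mul hsd)).mul ((hud.mul hyd).sub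
      ((hsd.const_mul (4 : ℂ)⁻¹).add
        (((hyd.mul hyd).mul (hud.inv hne)).const_mul 6)))).congr_deriv ?_
    have hw' : w r = u r + 2 * (r * ω) := by rw [h.u_eq]; ring
    simp only [hF, hE, hw', Pi.mul_apply, Pi.inv_apply, Pi.add_apply, Pi.sub_apply]
    generalize (r : ℂ) * ω = s at hs0 ⊢
    field_simp
    ring
  have hFX := isBigO_zpow_mul (-1) hFO hXO (by norm_num)
  have hlim : Tendsto (fun r => F r * X r) atTop (𝓝 0) :=
    hFX.trans_tendsto (tendsto_zpow_atTop_zero (by norm_num))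
  have hFX2 := isBigO_zpow_neg_two_of_deriv hderiv
    ((isBigO_zpow_mul (-3) hFO hEO (by norm_num)).const_mul_left ω) hlim
  have hX0 : X =O[atTop] fun r : ℝ => r ^ (0 : ℤ) := by
    have hs2 := isBigO_zpow_mul 2 h.isBigO_dir h.isBigO_dir (by norm_num)
    refine (isBigO_zpow_mul 0 (isBigO_zpow_mul 2 h.isBigO_exp hs2 (by norm_num)) hFX2
      (by norm_num)).congr' ?_ .rfl
    filter_upwards [eventually_gt_atTop 0] with r hr
    have hs0 : (r : ℂ) * ω ≠ 0 := mul_ne_zero (by exact_mod_cast hr.ne') h.dir_ne_zero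
    simp only [hF, exp_neg]
    generalize (r : ℂ) * ω = s at hs0 ⊢
    field_simp [exp_ne_zero]
  simpa [hX] using hX0.add (isBigO_zpow_mono hcorr (by norm_num : (-1 : ℤ) ≤ 0))

lemma isBigO_y (h : IsRaySolution ω a u w y) : y =O[atTop] fun r : ℝ => r ^ (-1 : ℤ) := by
  refine (isBigO_zpow_mul (-1) h.isBigO_u_mul_y h.isBigO_u_inv (by norm_num)).congr' ?_ .rfl
  filter_upwards [h.eventually_u_ne_zero] with r hne
  field_simp

lemma isBigO_hamiltonian (h : IsRaySolution ω a u w y) :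
    (fun r => (y r + 1 / 2) ^ 2 / u r - w r * y r / 2) =O[atTop] fun r : ℝ => r ^ (-1 : ℤ) := by
  have hyh := h.isBigO_y_zero.add (isBigO_zpow_const (1 / 2) le_rfl)
  have h₁ := isBigO_zpow_mul (-1) (isBigO_zpow_mul 0 hyh hyh (by norm_num)) h.isBigO_u_inv
    (by norm_num)
  have h₂ := (isBigO_zpow_mul (-1) h.isBigO_w h.isBigO_y (by norm_num)).const_mul_left (1 / 2)
  exact (h₁.sub h₂).congr_left fun r => by ring

end IsRaySolution

lemma rayDir_sq : rayDir ^ 2 = -I := by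
  rw [rayDir, ← exp_nat_mul, show ((2 : ℕ) : ℂ) * (-(Real.pi : ℂ) * I / 4)
    = -((Real.pi : ℂ) / 2 * I) by push_cast; ring, exp_neg, exp_pi_div_two_mul_I, inv_I]

/-- A solution that stays close to `-2s`, but different from it, far out on a ray is holomorphic
near the ray. -/
lemma eventually_analyticAt_of_painleve {u : ℂ → ℂ} {ω : ℂ} {M : ℝ}
    (hode : ∀ s, u s ≠ 0 →
      deriv (deriv u) s = deriv u s ^ 2 / (2 * u s) + painleveCubic s (u s + 2 * s))
    (hω : ‖ω‖ = 1) (hM : 0 < M)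
    (hne : ∀ᶠ r : ℝ in atTop, u (r * ω) + 2 * (r * ω) ≠ 0)
    (hle : ∀ᶠ r : ℝ in atTop, ‖u (r * ω) + 2 * (r * ω)‖ ≤ M) :
    ∀ᶠ r : ℝ in atTop, AnalyticAt ℂ u (r * ω) := by
  obtain ⟨R, hR⟩ := eventually_atTop.mp (hne.and hle)
  filter_upwards [eventually_ge_atTop R, eventually_gt_atTop (8 * M), eventually_gt_atTop 0]
    with r hr hrM hr0
  obtain ⟨hrne, hrle⟩ := hR r hr
  have hω0 : ω ≠ 0 := norm_pos_iff.mp (hω ▸ one_pos)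
  have hnorm : ‖(r : ℂ) * ω‖ = r := by simp [hω, abs_of_pos hr0]
  have hray : Tendsto (fun t : ℝ => (t : ℂ) * ω) (𝓝[>] r) (𝓝[≠] ((r : ℂ) * ω)) := by
    refine tendsto_nhdsWithin_of_tendsto_nhds_of_eventually_within _ ?_ ?_
    · exact ((by fun_prop : Continuous fun t : ℝ => (t : ℂ) * ω).tendsto r).mono_left
        nhdsWithin_le_nhds
    · filter_upwards [self_mem_nhdsWithin] with t (ht : r < t) heq
      exact ht.ne' (by exact_mod_cast mul_right_cancel₀ hω0 heq)
  have hfreq : ∃ᶠ t in 𝓝[≠] ((r : ℂ) * ω), ‖u t + 2 * t‖ ≤ M := by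
    refine hray.frequently (Eventually.frequently ?_)
    filter_upwards [self_mem_nhdsWithin] with t (ht : r < t)
    exact (hR t (hr.trans ht.le)).2
  have hdiff := differentiableAt_of_painleve hode hM (by rw [hnorm]; linarith) hrne hrle hfreq
  have hc : ContinuousAt (fun t => u t + 2 * t) ((r : ℂ) * ω) :=
    hdiff.continuousAt.add (by fun_prop)
  rw [analyticAt_iff_eventually_differentiableAt]
  have hnear : ∀ᶠ t in 𝓝 ((r : ℂ) * ω), ‖u t + 2 * t‖ ≤ 2 * M :=
    (hc.norm.eventually (gt_mem_nhds (by linarith : ‖u (r * ω) + 2 * (r * ω)‖ < 2 * M))).mono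
      fun t ht => ht.le
  filter_upwards [hc.eventually_ne hrne, hnear.eventually_nhds,
    continuous_norm.continuousAt.eventually (lt_mem_nhds (hnorm ▸ hrM))] with t ht₁ ht₂ ht₃
  exact differentiableAt_of_painleve hode (by linarith : 0 < 2 * M) (by linarith) ht₁
    ht₂.self_of_nhds (ht₂.filter_mono nhdsWithin_le_nhds).frequently

/-- Let `u` solve Painlevé IV with `Θ = 0`, `Θ_∞ = 1/2`, let
`z = (1/4)(-u' + u² + 2su)` and `H = z²/u - (u/2 + s)(z - 1/2)`.  If
`u(s) = -2s - (2i/√π)e^{-s²} + O(s⁻¹)` along the ray `arg s = -π/4`, then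
`H(s) = O(s⁻¹)` along the same ray. -/
theorem stmt_9 (u : ℂ → ℂ)
    (hode : ∀ s : ℂ, u s ≠ 0 →
      deriv (deriv u) s = (deriv u s) ^ 2 / (2 * u s) + (3 / 2 : ℂ) * (u s) ^ 3
        + 4 * s * (u s) ^ 2 + 2 * (s ^ 2 + 1 - 2 * (1 / 2 : ℂ)) * u s
        - 8 * (0 : ℂ) ^ 2 / u s)
    (hu : (fun r : ℝ => u ((r : ℂ) * rayDir) + 2 * ((r : ℂ) * rayDir)
        + (2 * I / (Real.sqrt Real.pi : ℂ)) * Complex.exp (-((r : ℂ) * rayDir) ^ 2))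
      =O[atTop] fun r : ℝ => r⁻¹) :
    (fun r : ℝ =>
      ((1 / 4 : ℂ) * (-(deriv u ((r : ℂ) * rayDir)) + (u ((r : ℂ) * rayDir)) ^ 2
          + 2 * ((r : ℂ) * rayDir) * u ((r : ℂ) * rayDir))) ^ 2 / u ((r : ℂ) * rayDir)
        - (u ((r : ℂ) * rayDir) / 2 + (r : ℂ) * rayDir) *
          ((1 / 4 : ℂ) * (-(deriv u ((r : ℂ) * rayDir)) + (u ((r : ℂ) * rayDir)) ^ 2
              + 2 * ((r : ℂ) * rayDir) * u ((r : ℂ) * rayDir)) - 1 / 2))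
      =O[atTop] fun r : ℝ => r⁻¹ := by
  set ω := rayDir
  have hω : ω ^ 2 = -I := rayDir_sq
  set a : ℂ := -(2 * I / (Real.sqrt Real.pi : ℂ)) with ha
  have ha0 : a ≠ 0 := by simp [ha, Real.sqrt_ne_zero', Real.pi_pos]
  have hode' : ∀ s, u s ≠ 0 →
      deriv (deriv u) s = deriv u s ^ 2 / (2 * u s) + painleveCubic s (u s + 2 * s) := by
    intro s hs
    rw [hode s hs, painleveCubic]
    ring
  have hωn : ‖ω‖ = 1 := norm_eq_one_of_sq_eq_neg_I hω
  have hsub : (fun r : ℝ => (u (r * ω) + 2 * (r * ω)) - a * exp (-(r * ω) ^ 2)) =O[atTop]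
      fun r : ℝ => r ^ (-1 : ℤ) := by
    simp only [zpow_neg_one]
    exact hu.congr_left fun r => by rw [ha]; ring
  have hlim : Tendsto (fun r : ℝ => (u (r * ω) + 2 * (r * ω)) - a * exp (-(r * ω) ^ 2)) atTop
      (𝓝 0) :=
    hsub.trans_tendsto (tendsto_zpow_atTop_zero (by norm_num))
  have hsmall (ε : ℝ) (hε : 0 < ε) : ∀ᶠ r : ℝ in atTop,
      ‖(u (r * ω) + 2 * (r * ω)) - a * exp (-(r * ω) ^ 2)‖ < ε := by
    simpa using (hlim.norm).eventually (gt_mem_nhds (by simpa using hε))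
  have hmain (r : ℝ) : ‖a * exp (-((r : ℂ) * ω) ^ 2)‖ = ‖a‖ := by
    rw [norm_mul, norm_exp_neg_sq_of_sq_eq_neg_I hω, mul_one]
  have hne : ∀ᶠ r : ℝ in atTop, u (r * ω) + 2 * (r * ω) ≠ 0 := by
    filter_upwards [hsmall ‖a‖ (norm_pos_iff.mpr ha0)] with r hr h0
    rw [h0, zero_sub, norm_neg, hmain] at hr
    exact lt_irrefl _ hr
  have hle : ∀ᶠ r : ℝ in atTop, ‖u (r * ω) + 2 * (r * ω)‖ ≤ ‖a‖ + 1 := by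
    filter_upwards [hsmall 1 one_pos] with r hr
    have := norm_le_norm_add_norm_sub' (u (r * ω) + 2 * (r * ω)) (a * exp (-(r * ω) ^ 2))
    rw [hmain] at this
    linarith
  have han := eventually_analyticAt_of_painleve hode' hωn (by positivity) hne hle
  have hu0 : ∀ᶠ r : ℝ in atTop, u (r * ω) ≠ 0 := by
    filter_upwards [hle, eventually_gt_atTop (‖a‖ + 1)] with r hr hra h0
    have hr0 : 0 < r := by linarith [norm_nonneg a]
    rw [h0, zero_add] at hr
    simp [hωn, abs_of_pos hr0] at hr
    linarith
  have hsol : IsRaySolution ω a (fun r => u (r * ω)) (fun r => u (r * ω) + 2 * (r * ω))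
      (fun r => (1 / 4 : ℂ) * (-(deriv u (r * ω)) + u (r * ω) ^ 2 + 2 * (r * ω) * u (r * ω))
        - 1 / 2) := by
    refine ⟨hω, fun r => by ring, ?_, ?_, hsub⟩
    · filter_upwards [han] with r hr
      have hdu := (hr.differentiableAt.hasDerivAt).comp r (IsRaySolution.hasDerivAt_dir ω r)
      exact (hdu.add ((IsRaySolution.hasDerivAt_dir ω r).const_mul 2)).congr_deriv (by ring)
    · filter_upwards [han, hu0] with r hr hr0
      have hds := IsRaySolution.hasDerivAt_dir ω r
      have hdu := (hr.differentiableAt.hasDerivAt).comp r hds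
      have hddu := (hr.deriv.differentiableAt.hasDerivAt).comp r hds
      refine ((((hddu.neg.add (hdu.pow 2)).add ((hds.const_mul 2).mul hdu)).const_mul
        (1 / 4 : ℂ)).sub_const (1 / 2)).congr_deriv ?_
      rw [hode' _ hr0, painleveCubic]
      simp only [Function.comp_apply]
      field_simp
      ring
  refine (hsol.isBigO_hamiltonian.congr_left fun r => ?_).trans
    (by simp only [zpow_neg_one]; exact isBigO_refl _ _)
  ring
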